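/- Let f: A → B and g: C → D be surjective homomorphisms of MV-algebras, and h: A → C, k: B → D homomorphisms with g∘h = k∘f. Let P := {(c,b) ∈ C×B : g(c)=k(b)} (with componentwise operations) and let ⟨h,f⟩: A → P be the homomorphism a ↦ (h(a),f(a)). Then ⟨h,f⟩ is surjective if and only if the restriction h: ker(f) → ker(g) is surjective (equivalently, h(ker(f)) = ker(g)). -/

import Mathlib

namespace MVPaper

/-- An MV-algebra: a set with a binary `⊕`, a unary `¬`, and a constant `0`
satisfying the MV-algebra axioms. -/
class MV (α : Type*) where
  oplus : α → α → α
  neg : α → α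
  zero : α
  oplus_assoc : ∀ x y z : α, oplus x (oplus y z) = oplus (oplus x y) z
  oplus_comm : ∀ x y : α, oplus x y = oplus y x
  oplus_zero : ∀ x : α, oplus x zero = x
  neg_neg : ∀ x : α, neg (neg x) = x
  oplus_neg_zero : ∀ x : α, oplus x (neg zero) = neg zero
  lukasiewicz : ∀ x y : α,
    oplus (neg (oplus (neg x) y)) y = oplus (neg (oplus (neg y) x)) x

namespace MV

variable {α : Type*} [MV α]

/-- `1 := ¬0`. -/
def one : α := neg zero

/-- `x ⊙ y := ¬(¬x ⊕ ¬y)`. -/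
def odot (x y : α) : α := neg (oplus (neg x) (neg y))

/-- `x ⊖ y := ¬(¬x ⊕ y)`. -/
def ominus (x y : α) : α := neg (oplus (neg x) y)

/-- `d(x,y) := (x ⊖ y) ⊕ (y ⊖ x)`. -/
def dist (x y : α) : α := oplus (ominus x y) (ominus y x)

/-- The natural order: `x ≤ y` iff `¬x ⊕ y = 1`. -/
def le (x y : α) : Prop := oplus (neg x) y = one

/-- `x ∨ y := (x ⊖ y) ⊕ y`. -/
def sup (x y : α) : α := oplus (ominus x y) y

/-- `x ∧ y := x ⊙ (¬x ⊕ y)`. -/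
def inf (x y : α) : α := odot x (oplus (neg x) y)

/-- `n · a`, the `n`-fold sum `a ⊕ ⋯ ⊕ a`. -/
def nsmul : ℕ → α → α
  | 0, _ => zero
  | n + 1, a => oplus a (nsmul n a)

end MV

/-- Products of MV-algebras, with componentwise operations. -/
instance prodMV {α β : Type*} [MV α] [MV β] : MV (α × β) where
  oplus x y := (MV.oplus x.1 y.1, MV.oplus x.2 y.2)
  neg x := (MV.neg x.1, MV.neg x.2)
  zero := (MV.zero, MV.zero)
  oplus_assoc x y z :=
    congrArg₂ Prod.mk (MV.oplus_assoc _ _ _) (MV.oplus_assoc _ _ _)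
  oplus_comm x y :=
    congrArg₂ Prod.mk (MV.oplus_comm _ _) (MV.oplus_comm _ _)
  oplus_zero x := by
    obtain ⟨a, b⟩ := x
    exact congrArg₂ Prod.mk (MV.oplus_zero a) (MV.oplus_zero b)
  neg_neg x := by
    obtain ⟨a, b⟩ := x
    exact congrArg₂ Prod.mk (MV.neg_neg a) (MV.neg_neg b)
  oplus_neg_zero x :=
    congrArg₂ Prod.mk (MV.oplus_neg_zero _) (MV.oplus_neg_zero _)
  lukasiewicz x y :=
    congrArg₂ Prod.mk (MV.lukasiewicz _ _) (MV.lukasiewicz _ _)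

/-- A homomorphism of MV-algebras: a map preserving `⊕`, `¬` and `0`. -/
structure IsHom {α β : Type*} [MV α] [MV β] (f : α → β) : Prop where
  map_zero : f MV.zero = MV.zero
  map_oplus : ∀ x y : α, f (MV.oplus x y) = MV.oplus (f x) (f y)
  map_neg : ∀ x : α, f (MV.neg x) = MV.neg (f x)

/-- An ideal of an MV-algebra: contains `0`, closed under `⊕`, downward closed. -/
structure IsIdeal {α : Type*} [MV α] (I : Set α) : Prop where
  zero_mem : MV.zero ∈ I
  oplus_mem : ∀ ⦃x⦄, x ∈ I → ∀ ⦃y⦄, y ∈ I → MV.oplus x y ∈ I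
  lower_mem : ∀ ⦃x⦄, x ∈ I → ∀ ⦃y⦄, MV.le y x → y ∈ I

/-- The kernel of a homomorphism. -/
def ker {α β : Type*} [MV α] [MV β] (f : α → β) : Set α := {x | f x = MV.zero}

/-- The radical of an MV-algebra: `Rad(A) = {a | n·a ≤ ¬a for all n}`
(the intersection of all maximal proper ideals). -/
def Rad (α : Type*) [MV α] : Set α :=
  {a | ∀ n : ℕ, MV.le (MV.nsmul n a) (MV.neg a)}

/-- `P(A) := Rad(A) ∪ ¬Rad(A)`. -/
def PSet (α : Type*) [MV α] : Set α :=
  Rad α ∪ {x | MV.neg x ∈ Rad α}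

/-- An MV-algebra is trivial if `0 = 1`. -/
def IsTrivial (α : Type*) [MV α] : Prop := (MV.zero : α) = MV.one

/-- An MV-algebra is semisimple if its radical is trivial. -/
def Semisimple (α : Type*) [MV α] : Prop := Rad α = ({MV.zero} : Set α)

/-- An MV-algebra is perfect if `A = Rad(A) ∪ ¬Rad(A)`. -/
def Perfect (α : Type*) [MV α] : Prop := ∀ a : α, a ∈ PSet α

/-- `q : α → Q` realizes `Q` as the quotient of `α` by the ideal `I`,
i.e. by the congruence `x ∼ y ↔ d(x,y) ∈ I`. -/
structure IsQuotientBy {α Q : Type*} [MV α] [MV Q] (I : Set α) (q : α → Q) : Prop where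
  hom : IsHom q
  surj : Function.Surjective q
  eq_iff : ∀ x y : α, q x = q y ↔ MV.dist x y ∈ I

namespace MV

variable {α : Type*} [MV α]

theorem zero_oplus (x : α) : oplus zero x = x := by
  rw [oplus_comm, oplus_zero]

theorem neg_oplus_self (x : α) : oplus (neg x) x = neg zero := by
  have h := lukasiewicz (neg zero) x
  rwa [neg_neg, zero_oplus, oplus_neg_zero] at h

theorem ominus_zero (x : α) : ominus x zero = x := by
  rw [ominus, oplus_zero, neg_neg]

theorem ominus_self (x : α) : ominus x x = zero := by
  rw [ominus, neg_oplus_self, neg_neg]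

theorem ominus_ominus_comm (x y : α) : ominus x (ominus x y) = ominus y (ominus y x) := by
  have h := lukasiewicz (neg y) (neg x)
  rw [neg_neg, neg_neg, oplus_comm y, oplus_comm x] at h
  rw [ominus, ominus, ominus, ominus, oplus_comm (neg x) (neg _), h,
    oplus_comm (neg y) (neg _)]

theorem ominus_ominus_self_left (x y : α) : ominus (ominus x y) x = zero := by
  rw [ominus, ominus, neg_neg, oplus_comm (neg x), ← oplus_assoc, neg_oplus_self,
    oplus_neg_zero, neg_neg]

theorem ominus_ominus_oplus_ominus (x y : α) :
    oplus (ominus x (ominus x y)) (ominus y x) = y := by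
  rw [ominus_ominus_comm]
  have h : oplus (ominus y (ominus y x)) (ominus y x) =
      oplus (ominus (ominus y x) y) y := lukasiewicz _ _
  rw [h, ominus_ominus_self_left, zero_oplus]

end MV

theorem IsHom.map_ominus {α β : Type*} [MV α] [MV β] {f : α → β} (hf : IsHom f) (x y : α) :
    f (MV.ominus x y) = MV.ominus (f x) (f y) := by
  rw [MV.ominus, MV.ominus, hf.map_neg, hf.map_oplus, hf.map_neg]

/-- Given surjective homomorphisms `f : A → B`, `g : C → D` and homomorphisms
`h : A → C`, `k : B → D` with `g ∘ h = k ∘ f`, the induced map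
`⟨h,f⟩ : A → P = {(c,b) : g c = k b}` is surjective iff the restriction
`h : ker f → ker g` is surjective, i.e. `h '' ker f = ker g`. -/
theorem pairing_surjective_iff {α β γ δ : Type*} [MV α] [MV β] [MV γ] [MV δ]
    {f : α → β} {g : γ → δ} {h : α → γ} {k : β → δ}
    (hf : IsHom f) (hfs : Function.Surjective f)
    (hg : IsHom g) (hgs : Function.Surjective g)
    (hh : IsHom h) (hk : IsHom k)
    (hcomm : g ∘ h = k ∘ f) :
    Set.MapsTo h (ker f) (ker g) ∧
    ((∀ p : γ × β, g p.1 = k p.2 → ∃ a : α, (h a, f a) = p) ↔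
      h '' ker f = ker g) := by
  have hcomm' : ∀ a, g (h a) = k (f a) := congrFun hcomm
  have hmaps : Set.MapsTo h (ker f) (ker g) := fun a (ha : f a = MV.zero) => by
    change g (h a) = MV.zero
    rw [hcomm', ha, hk.map_zero]
  refine ⟨hmaps, fun hsurj => hmaps.image_subset.antisymm fun c (hc : g c = MV.zero) => ?_,
    fun himage => ?_⟩
  · obtain ⟨a, ha⟩ := hsurj (c, MV.zero) (hc.trans hk.map_zero.symm)
    exact ⟨a, congrArg Prod.snd ha, congrArg Prod.fst ha⟩
  · rintro ⟨c, b⟩ (hcb : g c = k b)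
    obtain ⟨a, rfl⟩ := hfs b
    have hga : g (h a) = g c := (hcomm' a).trans hcb.symm
    obtain ⟨u, hu : f u = MV.zero, hhu⟩ : MV.ominus c (h a) ∈ h '' ker f := by
      rw [himage]
      change g _ = MV.zero
      rw [hg.map_ominus, hga, MV.ominus_self]
    obtain ⟨v, hv : f v = MV.zero, hhv⟩ : MV.ominus (h a) c ∈ h '' ker f := by
      rw [himage]
      change g _ = MV.zero
      rw [hg.map_ominus, hga, MV.ominus_self]
    refine ⟨MV.oplus (MV.ominus a v) u, Prod.ext ?_ ?_⟩
    · change h _ = c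
      rw [hh.map_oplus, hh.map_ominus, hhu, hhv, MV.ominus_ominus_oplus_ominus]
    · change f _ = f a
      rw [hf.map_oplus, hf.map_ominus, hu, hv, MV.ominus_zero, MV.oplus_zero]

end MVPaper
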